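/- Let R be a commutative ring and work in the group algebra RW_r (the case q = Q = 1). Let λ ∈ Λ(n,r) be an a-bicomposition and μ ∈ Λ(n,r) a b-bicomposition, let (d,v,u) be an admissible triple for (λ,μ), and set c = udv^{−1}. Let W_λ = {w ∈ W_r : for every i ∈ {1,…,r}, |iw| lies in the same row of t^λ as i, and iw > 0 whenever i lies in the second component of t^λ}, and define W_μ from t^μ in the same way. Then the double coset sum ∑_{w ∈ W_μ c W_λ} w lies in the right ideal (∑_{w ∈ W_μ} w)·RW_r, and there is a homomorphism of right RW_r-modules φ from (∑_{w ∈ W_λ} w)·RW_r to (∑_{w ∈ W_μ} w)·RW_r satisfying φ(∑_{w ∈ W_λ} w) = ∑_{w ∈ W_μ c W_λ} w (each element of the double coset W_μ c W_λ occurring exactly once). -/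

import Mathlib

/-! Both `W_λ` and `W_μ` are finite subgroups of `W_r`: lying in a common row of `t^λ` is an
equivalence relation on `{1, …, r}` which respects the two components. The double coset
`W_μ c W_λ` is stable under left multiplication by `W_μ` and right multiplication by `W_λ`.
Splitting it into cosets `W_μ g` gives `∑_{W_μ c W_λ} w = (∑_{W_μ} w) · h` with `h ∈ R W_r`
(`exists_right_factor`), and splitting it into cosets `g W_λ` gives
`∑_{W_μ c W_λ} w = Y · ∑_{W_λ} w` (`exists_left_factor`). Left multiplication by `Y` is then the
required homomorphism `φ`: it commutes with right multiplication, and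
`Y · (∑_{W_λ} w) · h' = (∑_{W_μ} w) · h · h'`. Here `c ∈ W_r` because
`d, v, u ∈ W_r`. -/

/- The hyperoctahedral group `W_r` (the Weyl group of type `B_r`), realized as the group
of permutations `w` of `{±1, …, ±r}` satisfying `(−i)w = −(iw)`.  We realize its elements
inside `Equiv.Perm ℤ`, letting `w` act on `i` on the *right* via `i·w := w⁻¹ i` (so that
`i·(wd) = (i·w)·d` and products of group elements can be written in the same order as in
the paper). -/

namespace QQS

abbrev G : Type := Equiv.Perm ℤ

/-- The generators `s₀ = (1,−1)` and `sᵢ = (i,i+1)(−i,−i−1)`. -/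
def s (i : ℕ) : G :=
  if i = 0 then Equiv.swap 1 (-1)
  else Equiv.swap (i : ℤ) ((i : ℤ) + 1) * Equiv.swap (-(i : ℤ)) (-((i : ℤ) + 1))

/-- The generating set `{s₀, s₁, …, s_{r−1}}` of `W_r`. -/
def gens (r : ℕ) : Set G := {x | ∃ i, i < r ∧ x = s i}

/-- Membership in `W_r`: permutations of `{±1, …, ±r}` commuting with negation. -/
def inW (r : ℕ) (w : G) : Prop :=
  (∀ i : ℤ, w (-i) = -(w i)) ∧ ∀ i : ℤ, (r : ℤ) < |i| → w i = i

/-- The length `ℓ(w)` of `w ∈ W_r` with respect to the generators `s₀, …, s_{r−1}`. -/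
noncomputable def len (r : ℕ) (w : G) : ℕ :=
  sInf {n | ∃ l : List G, l.length = n ∧ (∀ x ∈ l, x ∈ gens r) ∧ l.prod = w}

/-- The partial sum of the first `k` parts of a composition. -/
def psum (l : List ℕ) (k : ℕ) : ℕ := (l.take k).sum

end QQS
namespace QQS

/- The root system of type `B_r`.  `W_r` acts on the vector space `V` with basis
`e₁, …, e_r`; we realize a vector `x = ∑ xᵢ eᵢ ∈ V` as the odd function `ℤ → ℚ` with
value `xᵢ` at `i` and `−xᵢ` at `−i`.  The (right) action of `w` on `V` determined by
`eᵢ·w = e_{i·w}` if `i·w > 0` and `eᵢ·w = −e_{−(i·w)}` if `i·w < 0` then becomes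
`x·w = x ∘ w`. -/

/-- The basis vector `eᵢ`, as an odd function `ℤ → ℚ`. -/
def evec (i : ℕ) : ℤ → ℚ := fun j => if j = (i : ℤ) then 1 else if j = -(i : ℤ) then -1 else 0

/-- The simple roots: `α₀ = e₁` and `αᵢ = e_{i+1} − eᵢ` for `i ≥ 1`. -/
def sroot : ℕ → (ℤ → ℚ)
  | 0 => evec 1
  | i + 1 => evec (i + 2) - evec (i + 1)

/-- `Δ₀ = {α₀, α₁, …, α_{r−1}}`. -/
def Delta0 (r : ℕ) : Set (ℤ → ℚ) := {x | ∃ i, i < r ∧ x = sroot i}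

/-- `Δ = Δ₀ ∖ {α₀}`. -/
def DeltaS (r : ℕ) : Set (ℤ → ℚ) := Delta0 r \ {sroot 0}

/-- The right action of `w ∈ W_r` on `V`: `x·w = x ∘ w`. -/
def rAct (w : G) (x : ℤ → ℚ) : ℤ → ℚ := fun j => x (w j)

/-- `x` is a positive root: `eᵢ`, `eᵢ + eⱼ` or `eⱼ − eᵢ` with `1 ≤ i < j ≤ r`. -/
def isPos (r : ℕ) (x : ℤ → ℚ) : Prop :=
  (∃ i, 1 ≤ i ∧ i ≤ r ∧ x = evec i) ∨
  (∃ i j, 1 ≤ i ∧ i < j ∧ j ≤ r ∧ (x = evec i + evec j ∨ x = evec j - evec i))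

/-- `D_K = {d ∈ W_r : α·d is a positive root for every α ∈ K}`. -/
def DD (r : ℕ) (K : Set (ℤ → ℚ)) : Set G :=
  {d | inW r d ∧ ∀ α ∈ K, isPos r (rAct d α)}

/-- `D_{K,L} = D_K ∩ D_L⁻¹`. -/
def DDd (r : ℕ) (K L : Set (ℤ → ℚ)) : Set G := {d | d ∈ DD r K ∧ d⁻¹ ∈ DD r L}

/-- For `M ⊆ Δ₀`, the parabolic subgroup `W_M`, generated by the reflections `s_α`
for `α ∈ M` (the reflection in the hyperplane orthogonal to `αᵢ` is `sᵢ`). -/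
def Wpar (r : ℕ) (M : Set (ℤ → ℚ)) : Subgroup G :=
  Subgroup.closure {w | ∃ i, i < r ∧ sroot i ∈ M ∧ w = s i}

/-- `D^M_{K,L} = D_K ∩ D_L⁻¹ ∩ W_M`. -/
def DDm (r : ℕ) (K L M : Set (ℤ → ℚ)) : Set G := {d | d ∈ DDd r K L ∧ d ∈ Wpar r M}

end QQS
namespace QQS

/- Fix an `a`-bicomposition `λ = (l1, l2)` and a `b`-bicomposition `μ = (m1, m2)` in
`Λ(n,r)`.  The sets of simple roots `J, I ⊆ Δ`, and `Ã, B̃, A, B ⊆ Δ₀`. -/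

/-- `j` is a partial sum of the composition `l`. -/
def isPartialSum (l : List ℕ) (j : ℕ) : Prop := ∃ k, psum l k = j

/-- `{α_{off+j} : 1 ≤ j ≤ l.sum − 1, j not a partial sum of l}`. -/
def compRoots (off : ℕ) (l : List ℕ) : Set (ℤ → ℚ) :=
  {x | ∃ j, 1 ≤ j ∧ j + 1 ≤ l.sum ∧ ¬ isPartialSum l j ∧ x = sroot (off + j)}

/-- `J = J₁ ∪ J₂ ⊆ Δ` associated to the bicomposition `(l1, l2)`. -/
def Jset (l1 l2 : List ℕ) : Set (ℤ → ℚ) := compRoots 0 l1 ∪ compRoots l1.sum l2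

/-- `Ã = Δ₀ ∖ {α_a}` if `a ≠ r`, and `Ã = Δ₀` if `a = r`. -/
def Atil (r a : ℕ) : Set (ℤ → ℚ) := if a = r then Delta0 r else Delta0 r \ {sroot a}

/-- `A = Ã ∖ {α₀}`. -/
def Aset (r a : ℕ) : Set (ℤ → ℚ) := Atil r a \ {sroot 0}

/-- An admissible triple `(d, v, u)` for `(λ, μ)`: `d ∈ D_{B̃,Ã}`,
`v ∈ D^A_{J, B·d ∩ A}` and `u ∈ D^B_{I, B ∩ J·v·d⁻¹}`. -/
def Admissible (r a b : ℕ) (l1 l2 m1 m2 : List ℕ) (d v u : G) : Prop :=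
  d ∈ DDd r (Atil r b) (Atil r a) ∧
  v ∈ DDm r (Jset l1 l2) ((rAct d '' Aset r b) ∩ Aset r a) (Aset r a) ∧
  u ∈ DDm r (Jset m1 m2) (Aset r b ∩ (rAct d⁻¹ '' (rAct v '' Jset l1 l2))) (Aset r b)

end QQS
namespace QQS

/- Bitableaux.  Given an `a`-bicomposition `λ = (l1, l2)` of `r`, the superstandard
bitableau `t^λ` has `1, …, a` entered in order along the rows of the first component and
`a+1, …, r` in order along the rows of the second component.  A general `λ`-bitableau is
`t^λ·w` for `w ∈ W_r`; since `w` acts on entries on the right (`i·w = w⁻¹ i`), the entry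
of `t^λ·w` at a given cell `p` is `w⁻¹ (tlamE a l1 l2 p)`. -/

/-- `x` and `y` lie (strictly) inside the same row-interval of the composition `l`,
i.e. the entries `x` and `y` lie in the same row of the row-filling of `l`. -/
def sameRowZ (l : List ℕ) (x y : ℤ) : Prop :=
  ∃ k : ℕ, (psum l k : ℤ) < x ∧ x ≤ (psum l (k + 1) : ℤ) ∧
    (psum l k : ℤ) < y ∧ y ≤ (psum l (k + 1) : ℤ)

/-- The (0-based) index of the row containing the entry `m` in the row-filling of the
composition `l`. -/
def rowIdxZ (l : List ℕ) (m : ℤ) : ℕ :=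
  ((Finset.range l.length).filter (fun k => (psum l (k + 1) : ℤ) < m)).card

/-- `row_t`: given the bicomposition `(l1, l2)` (with `n` parts in total), the row label
of the cell of `t^λ` holding the value `m`; rows of the first component are labelled
`1, …` and rows `j` of the second component are labelled `n + j`. -/
def rowOfVal (n : ℕ) (l1 l2 : List ℕ) (m : ℤ) : ℕ :=
  if m ≤ (l1.sum : ℤ) then rowIdxZ l1 m + 1 else n + rowIdxZ l2 (m - l1.sum) + 1

/-- The bitableau `t^λ·w` is row standard: all entries of the first component are
positive, and the entries increase from left to right along each row of each
component.  Here `a = l1.sum`. -/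
def rowStd (a : ℕ) (l1 l2 : List ℕ) (w : G) : Prop :=
  (∀ i j : ℕ, j < l1.getD i 0 → 0 < w⁻¹ ((psum l1 i + j + 1 : ℕ) : ℤ)) ∧
  (∀ i j : ℕ, j + 1 < l1.getD i 0 →
    w⁻¹ ((psum l1 i + j + 1 : ℕ) : ℤ) < w⁻¹ ((psum l1 i + j + 2 : ℕ) : ℤ)) ∧
  (∀ i j : ℕ, j + 1 < l2.getD i 0 →
    w⁻¹ ((a + psum l2 i + j + 1 : ℕ) : ℤ) < w⁻¹ ((a + psum l2 i + j + 2 : ℕ) : ℤ))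

/-- `p = (cpt, i, j)` is a cell of the diagram of the bicomposition `(l1, l2)`;
`cpt = true` denotes the first component. -/
def cell (l1 l2 : List ℕ) (p : Bool × ℕ × ℕ) : Prop :=
  p.2.2 < (if p.1 then l1 else l2).getD p.2.1 0

instance cellDec (l1 l2 : List ℕ) : DecidablePred (cell l1 l2) := fun p =>
  inferInstanceAs (Decidable (p.2.2 < (if p.1 then l1 else l2).getD p.2.1 0))

/-- The entry of the bitableau `t^λ` at the cell `p`, where `a = l1.sum`. -/
def tlamE (a : ℕ) (l1 l2 : List ℕ) (p : Bool × ℕ × ℕ) : ℤ :=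
  if p.1 then ((psum l1 p.2.1 + p.2.2 + 1 : ℕ) : ℤ)
  else ((a + psum l2 p.2.1 + p.2.2 + 1 : ℕ) : ℤ)

end QQS
namespace QQS

/- The group algebra `R W_r`, inside the monoid algebra of `Equiv.Perm ℤ`. -/

/-- The underlying set of the group algebra `R W_r` inside `MonoidAlgebra R G`:
the `R`-span of the elements `w ∈ W_r`. -/
noncomputable def Hspan (R : Type) [CommRing R] (r : ℕ) :
    Submodule R (MonoidAlgebra R G) :=
  Submodule.span R {x | ∃ w, inW r w ∧ x = MonoidAlgebra.of R G w}

/-- `u_a⁺ = ∏_{i=1}^a (1 + (i,−i))` in the group algebra (the case `q = Q = 1`). -/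
noncomputable def uplusGA (R : Type) [CommRing R] (a : ℕ) : MonoidAlgebra R G :=
  ((List.range a).map (fun k => (1 : MonoidAlgebra R G) +
    MonoidAlgebra.of R G (Equiv.swap ((k + 1 : ℕ) : ℤ) (-((k + 1 : ℕ) : ℤ))))).prod

/-- `u_m⁻ = ∏_{i=1}^m (1 − (i,−i))` in the group algebra (the case `q = Q = 1`). -/
noncomputable def uminusGA (R : Type) [CommRing R] (m : ℕ) : MonoidAlgebra R G :=
  ((List.range m).map (fun k => (1 : MonoidAlgebra R G) -
    MonoidAlgebra.of R G (Equiv.swap ((k + 1 : ℕ) : ℤ) (-((k + 1 : ℕ) : ℤ))))).prod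

/-- The symmetric group `S_r ≤ W_r`, generated by `s₁, …, s_{r−1}`. -/
def Sgrp (r : ℕ) : Subgroup G := Subgroup.closure {x | ∃ i, 1 ≤ i ∧ i < r ∧ x = s i}

/-- `x` and `y` lie in the same row of the bitableau `t^λ`, where `λ = (l1, l2)` and
`a = l1.sum`. -/
def sameRowPair (a : ℕ) (l1 l2 : List ℕ) (x y : ℤ) : Prop :=
  sameRowZ l1 x y ∨ sameRowZ l2 (x - (a : ℤ)) (y - (a : ℤ))

/-- The set of `w ∈ S_r` stabilizing each row of `t^λ` setwise. -/
def rowStabSet (r a : ℕ) (l1 l2 : List ℕ) : Set G :=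
  {w | w ∈ Sgrp r ∧ ∀ i : ℤ, 1 ≤ i → i ≤ (r : ℤ) → sameRowPair a l1 l2 i (w⁻¹ i)}

/-- `x_λ`: the sum of all `w ∈ S_r` stabilizing each row of `t^λ` setwise. -/
noncomputable def xGA (R : Type) [CommRing R] (r a : ℕ) (l1 l2 : List ℕ) :
    MonoidAlgebra R G :=
  ∑ᶠ w ∈ rowStabSet r a l1 l2, MonoidAlgebra.of R G w

end QQS
namespace QQS

/-- The sum `∑_{w ∈ S} w` in the group algebra (each element occurring exactly once). -/
noncomputable def sumOver (R : Type) [CommRing R] (S : Set G) : MonoidAlgebra R G :=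
  ∑ᶠ w ∈ S, MonoidAlgebra.of R G w

/-- `W_λ = {w ∈ W_r : for every i ∈ {1,…,r}, |i·w| lies in the same row of t^λ as i,
and i·w > 0 whenever i lies in the second component of t^λ}`. -/
def WlamSet (r : ℕ) (l1 l2 : List ℕ) : Set G :=
  {w | inW r w ∧ ∀ i : ℤ, 1 ≤ i → i ≤ (r : ℤ) →
    sameRowPair l1.sum l1 l2 i |w⁻¹ i| ∧ ((l1.sum : ℤ) < i → 0 < w⁻¹ i)}

/-- The double coset `W_μ c W_λ`. -/
def doubleCoset (r : ℕ) (m1 m2 l1 l2 : List ℕ) (c : G) : Set G :=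
  {x | ∃ w1 ∈ WlamSet r m1 m2, ∃ w2 ∈ WlamSet r l1 l2, x = w1 * c * w2}

/-- The right ideal `(∑_{w ∈ W_λ} w)·R W_r` of the group algebra `R W_r`. -/
noncomputable def rightIdealOf (R : Type) [CommRing R] (r : ℕ) (l1 l2 : List ℕ) :
    Submodule R (MonoidAlgebra R G) :=
  Submodule.map (LinearMap.mulLeft R (sumOver R (WlamSet r l1 l2))) (Hspan R r)

/-! ### The hyperoctahedral group as a finite subgroup -/

lemma perm_apply_inv (w : G) (x : ℤ) : w (w⁻¹ x) = x := Equiv.apply_symm_apply w x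

lemma perm_inv_apply (w : G) (x : ℤ) : w⁻¹ (w x) = x := Equiv.symm_apply_apply w x

/-- `W_r` as a subgroup of the permutations of `ℤ`. -/
def Wgrp (r : ℕ) : Subgroup G where
  carrier := {w | inW r w}
  one_mem' := ⟨fun _ => rfl, fun _ _ => rfl⟩
  mul_mem' := by
    rintro x y ⟨hx1, hx2⟩ ⟨hy1, hy2⟩
    refine ⟨fun i => ?_, fun i hi => ?_⟩
    · simp only [Equiv.Perm.mul_apply, hy1, hx1]
    · simp only [Equiv.Perm.mul_apply, hy2 i hi, hx2 i hi]
  inv_mem' := by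
    rintro x ⟨hx1, hx2⟩
    refine ⟨fun i => ?_, fun i hi => ?_⟩
    · rw [Equiv.Perm.inv_eq_iff_eq, hx1, perm_apply_inv]
    · rw [Equiv.Perm.inv_eq_iff_eq, hx2 i hi]

lemma finite_inW (r : ℕ) : {w : G | inW r w}.Finite := by
  have hf : Finite {x : ℤ // |x| ≤ (r : ℤ)} := by
    refine ((Set.finite_Icc (-(r : ℤ)) r).subset fun x hx => ?_).to_subtype
    exact abs_le.mp hx
  refine (Set.finite_range
    (Equiv.Perm.ofSubtype : Equiv.Perm {x : ℤ // |x| ≤ (r : ℤ)} →* G)).subset ?_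
  intro w hw
  have key : ∀ x : ℤ, |w x| ≤ (r : ℤ) ↔ |x| ≤ (r : ℤ) := by
    intro x
    constructor
    · intro h
      by_contra hx
      rw [hw.2 x (not_le.mp hx)] at h
      exact hx h
    · intro h
      by_contra hx
      have := w.injective (hw.2 (w x) (not_le.mp hx))
      rw [this] at hx
      exact hx h
  refine ⟨w.subtypePerm key, Equiv.Perm.ofSubtype_subtypePerm key fun x hx => ?_⟩
  by_contra h
  exact hx (hw.2 x (not_le.mp h))

lemma inW.abs_apply {r : ℕ} {w : G} (hw : inW r w) (x : ℤ) : |w (|x|)| = |w x| := by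
  rcases abs_choice x with h | h <;> rw [h]
  rw [hw.1, abs_neg]

lemma inW.abs_mem {r : ℕ} {w : G} (hw : inW r w) {i : ℤ} (h1 : 1 ≤ i) (h2 : i ≤ (r : ℤ)) :
    1 ≤ |w i| ∧ |w i| ≤ (r : ℤ) := by
  have h0 : w 0 = 0 := by
    have := hw.1 0
    rw [neg_zero] at this
    omega
  constructor
  · refine Int.one_le_abs fun h => ?_
    have := w.injective (h.trans h0.symm)
    omega
  · by_contra h
    have h3 := w.injective (hw.2 (w i) (not_le.mp h))
    rw [h3, abs_of_pos (by omega)] at h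
    exact h h2

/-! ### Rows of the bitableau `t^λ` -/

lemma psum_mono (l : List ℕ) : Monotone (psum l) := by
  intro i j hij
  exact (List.take_sublist_take_left hij).sum_le_sum (by simp)

lemma psum_le_sum (l : List ℕ) (k : ℕ) : psum l k ≤ l.sum :=
  (List.take_sublist k l).sum_le_sum (by simp)

lemma sameRowZ.bounds {l : List ℕ} {x y : ℤ} (h : sameRowZ l x y) :
    0 < x ∧ x ≤ l.sum ∧ 0 < y ∧ y ≤ l.sum := by
  obtain ⟨k, h1, h2, h3, h4⟩ := h
  have := psum_le_sum l (k + 1)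
  omega

lemma sameRowZ.symm {l : List ℕ} {x y : ℤ} (h : sameRowZ l x y) : sameRowZ l y x := by
  obtain ⟨k, h1, h2, h3, h4⟩ := h
  exact ⟨k, h3, h4, h1, h2⟩

lemma sameRowZ.trans {l : List ℕ} {x y z : ℤ} (h : sameRowZ l x y) (h' : sameRowZ l y z) :
    sameRowZ l x z := by
  obtain ⟨k, h1, h2, h3, h4⟩ := h
  obtain ⟨k', h1', h2', h3', h4'⟩ := h'
  have : k = k' := by
    rcases lt_trichotomy k k' with hk | hk | hk
    · have := psum_mono l (show k + 1 ≤ k' from hk)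
      omega
    · exact hk
    · have := psum_mono l (show k' + 1 ≤ k from hk)
      omega
  subst this
  exact ⟨k, h1, h2, h3', h4'⟩

lemma sameRowZ.refl {l : List ℕ} {x : ℤ} (h1 : 0 < x) (h2 : x ≤ l.sum) : sameRowZ l x x := by
  have hex : ∃ k, x ≤ (psum l k : ℤ) := ⟨l.length, by simpa [psum] using h2⟩
  classical
  -- The row of `x` ends at the first partial sum that is at least `x`.
  obtain ⟨k, hk⟩ : ∃ k, Nat.find hex = k + 1 := by
    refine Nat.exists_eq_succ_of_ne_zero fun h0 => ?_
    have := Nat.find_spec hex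
    rw [h0] at this
    simp [psum] at this
    omega
  have hs := Nat.find_spec hex
  rw [hk] at hs
  have hm := Nat.find_min hex (m := k) (by omega)
  exact ⟨k, by omega, hs, by omega, hs⟩

lemma sameRowPair_refl {l1 l2 : List ℕ} {x : ℤ} (h1 : 1 ≤ x)
    (h2 : x ≤ ((l1.sum + l2.sum : ℕ) : ℤ)) : sameRowPair l1.sum l1 l2 x x := by
  by_cases h : x ≤ l1.sum
  · exact Or.inl (sameRowZ.refl (by omega) h)
  · exact Or.inr (sameRowZ.refl (by omega) (by omega))

lemma sameRowPair.symm {a : ℕ} {l1 l2 : List ℕ} {x y : ℤ} (h : sameRowPair a l1 l2 x y) :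
    sameRowPair a l1 l2 y x :=
  h.imp sameRowZ.symm sameRowZ.symm

lemma sameRowPair.trans {l1 l2 : List ℕ} {x y z : ℤ} (h : sameRowPair l1.sum l1 l2 x y)
    (h' : sameRowPair l1.sum l1 l2 y z) : sameRowPair l1.sum l1 l2 x z := by
  rcases h with h | h <;> rcases h' with h' | h'
  · exact Or.inl (h.trans h')
  · have := h.bounds
    have := h'.bounds
    omega
  · have := h.bounds
    have := h'.bounds
    omega
  · exact Or.inr (h.trans h')

/-- Entries in a common row lie in the same component of the bitableau. -/
lemma sameRowPair.lt_of_lt {l1 l2 : List ℕ} {x y : ℤ} (h : sameRowPair l1.sum l1 l2 x y)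
    (hx : (l1.sum : ℤ) < x) : (l1.sum : ℤ) < y := by
  rcases h with h | h <;> have := h.bounds <;> omega

/-- `W_λ` is a subgroup of `W_r`. -/
def Wlam (r : ℕ) (l1 l2 : List ℕ) (hr : l1.sum + l2.sum = r) : Subgroup G where
  carrier := WlamSet r l1 l2
  one_mem' := by
    refine ⟨(Wgrp r).one_mem, fun i h1 h2 => ?_⟩
    rw [inv_one, Equiv.Perm.one_apply, abs_of_pos (by omega)]
    exact ⟨sameRowPair_refl h1 (by rw [hr]; exact h2), fun _ => by omega⟩
  mul_mem' := by
    rintro x y ⟨hx, hx'⟩ ⟨hy, hy'⟩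
    refine ⟨(Wgrp r).mul_mem hx hy, fun i h1 h2 => ?_⟩
    have hxi : inW r x⁻¹ := (Wgrp r).inv_mem hx
    have hyi : inW r y⁻¹ := (Wgrp r).inv_mem hy
    obtain ⟨b1, b2⟩ := hxi.abs_mem h1 h2
    obtain ⟨p1, p2⟩ := hx' i h1 h2
    obtain ⟨q1, q2⟩ := hy' _ b1 b2
    rw [mul_inv_rev, Equiv.Perm.mul_apply]
    rw [hyi.abs_apply] at q1
    refine ⟨p1.trans q1, fun hi => ?_⟩
    have := q2 (p1.lt_of_lt hi)
    rwa [abs_of_pos (p2 hi)] at this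
  inv_mem' := by
    rintro x ⟨hx, hx'⟩
    refine ⟨(Wgrp r).inv_mem hx, fun i h1 h2 => ?_⟩
    have hxi : inW r x⁻¹ := (Wgrp r).inv_mem hx
    obtain ⟨b1, b2⟩ := hx.abs_mem h1 h2
    obtain ⟨p1, p2⟩ := hx' _ b1 b2
    rw [hxi.abs_apply, perm_inv_apply, abs_of_pos (show 0 < i by omega)] at p1
    rw [inv_inv]
    refine ⟨p1.symm, fun hi => ?_⟩
    have hpos := p2 (p1.symm.lt_of_lt hi)
    by_contra hneg
    -- If `x i ≤ 0` then `x⁻¹ |x i| = -i < 0`, against the sign condition on `x`.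
    rw [abs_of_nonpos (not_lt.mp hneg), hxi.1, perm_inv_apply] at hpos
    omega

/-! ### Factoring sums over invariant sets -/

section Factor

variable {R : Type} [CommRing R]

lemma sumOver_empty : sumOver R (∅ : Set G) = 0 := finsum_mem_empty

lemma sumOver_union {S T : Set G} (h : Disjoint S T) (hS : S.Finite) (hT : T.Finite) :
    sumOver R (S ∪ T) = sumOver R S + sumOver R T :=
  finsum_mem_union h hS hT

lemma sumOver_leftCoset {S : Set G} (hS : S.Finite) (g : G) :
    sumOver R ((fun x => g * x) '' S) = MonoidAlgebra.of R G g * sumOver R S := by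
  unfold sumOver
  rw [finsum_mem_image ((mul_right_injective g).injOn), mul_finsum_mem' _ _ hS]
  simp only [map_mul]

lemma sumOver_rightCoset {S : Set G} (hS : S.Finite) (g : G) :
    sumOver R ((fun x => x * g) '' S) = sumOver R S * MonoidAlgebra.of R G g := by
  unfold sumOver
  rw [finsum_mem_image ((mul_left_injective g).injOn), finsum_mem_mul' _ _ hS]
  simp only [map_mul]

/-- A finite set stable under right multiplication by `H` is a disjoint union of cosets `gH`,
so its sum is a left multiple of the sum of `H`. -/
lemma exists_left_factor (H : Subgroup G) (S : Set G) (hS : S.Finite)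
    (hSH : ∀ x ∈ S, ∀ y ∈ H, x * y ∈ S) :
    ∃ Y : MonoidAlgebra R G, sumOver R S = Y * sumOver R (H : Set G) := by
  rcases S.eq_empty_or_nonempty with rfl | ⟨g, hg⟩
  · exact ⟨0, by rw [sumOver_empty, zero_mul]⟩
  · have hsub : (fun x => g * x) '' (H : Set G) ⊆ S := by
      rintro _ ⟨y, hy, rfl⟩
      exact hSH g hg y hy
    have hfin : (H : Set G).Finite :=
      (hS.subset hsub).of_finite_image (mul_right_injective g).injOn
    obtain ⟨Y, hY⟩ := exists_left_factor H (S \ (fun x => g * x) '' (H : Set G)) hS.sdiff (by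
      rintro x ⟨hx, hx'⟩ y hy
      refine ⟨hSH x hx y hy, ?_⟩
      rintro ⟨z, hz, hzx⟩
      exact hx' ⟨z * y⁻¹, H.mul_mem hz (H.inv_mem hy), by
        simp only at hzx ⊢
        rw [← mul_assoc, hzx, mul_inv_cancel_right]⟩)
    refine ⟨MonoidAlgebra.of R G g + Y, ?_⟩
    rw [add_mul, ← hY, ← sumOver_leftCoset hfin,
      ← sumOver_union Set.disjoint_sdiff_right (hS.subset hsub) hS.sdiff,
      Set.union_sdiff_cancel hsub]
termination_by S.ncard
decreasing_by
  exact Set.ncard_lt_ncard ⟨Set.sdiff_subset, fun h =>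
    (h hg).2 ⟨1, H.one_mem, mul_one g⟩⟩ hS

/-- The mirror image of `exists_left_factor`; for a subset of `W_r`, the coset representatives
lie in `W_r`. -/
lemma exists_right_factor (r : ℕ) (H : Subgroup G) (S : Set G) (hS : S ⊆ {w | inW r w})
    (hSH : ∀ x ∈ S, ∀ y ∈ H, y * x ∈ S) :
    ∃ h ∈ Hspan R r, sumOver R S = sumOver R (H : Set G) * h := by
  have hSf : S.Finite := (finite_inW r).subset hS
  rcases S.eq_empty_or_nonempty with rfl | ⟨g, hg⟩
  · exact ⟨0, Submodule.zero_mem _, by rw [sumOver_empty, mul_zero]⟩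
  · have hsub : (fun x => x * g) '' (H : Set G) ⊆ S := by
      rintro _ ⟨y, hy, rfl⟩
      exact hSH g hg y hy
    have hfin : (H : Set G).Finite :=
      (hSf.subset hsub).of_finite_image (mul_left_injective g).injOn
    obtain ⟨h, hh, hY⟩ := exists_right_factor r H (S \ (fun x => x * g) '' (H : Set G))
      (Set.sdiff_subset.trans hS) (by
      rintro x ⟨hx, hx'⟩ y hy
      refine ⟨hSH x hx y hy, ?_⟩
      rintro ⟨z, hz, hzx⟩
      exact hx' ⟨y⁻¹ * z, H.mul_mem (H.inv_mem hy) hz, by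
        simp only at hzx ⊢
        rw [mul_assoc, hzx, inv_mul_cancel_left]⟩)
    refine ⟨MonoidAlgebra.of R G g + h,
      Submodule.add_mem _ (Submodule.subset_span ⟨g, hS hg, rfl⟩) hh, ?_⟩
    rw [mul_add, ← hY, ← sumOver_rightCoset hfin,
      ← sumOver_union Set.disjoint_sdiff_right (hSf.subset hsub) hSf.sdiff,
      Set.union_sdiff_cancel hsub]
termination_by S.ncard
decreasing_by
  exact Set.ncard_lt_ncard ⟨Set.sdiff_subset, fun h =>
    (h hg).2 ⟨1, H.one_mem, one_mul g⟩⟩ hSf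

lemma Hspan_mul {r : ℕ} {x y : MonoidAlgebra R G} (hx : x ∈ Hspan R r) (hy : y ∈ Hspan R r) :
    x * y ∈ Hspan R r := by
  have h := Submodule.mul_mem_mul hx hy
  rw [Hspan, Submodule.span_mul_span] at h
  refine Submodule.span_mono ?_ h
  rintro _ ⟨_, ⟨w, hw, rfl⟩, _, ⟨w', hw', rfl⟩, rfl⟩
  exact ⟨w * w', (Wgrp r).mul_mem hw hw', (map_mul _ _ _).symm⟩

end Factor

/-! ### The homomorphism -/

/-- (Group algebra case, `q = Q = 1`.)  Let `(d,v,u)` be an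
admissible triple for `(λ,μ)` and `c = udv⁻¹`.  Then `∑_{w ∈ W_μ c W_λ} w` lies in the
right ideal `(∑_{w ∈ W_μ} w)·R W_r`, and there is a homomorphism `φ` of right
`R W_r`-modules from `(∑_{w ∈ W_λ} w)·R W_r` to `(∑_{w ∈ W_μ} w)·R W_r` with
`φ(∑_{w ∈ W_λ} w) = ∑_{w ∈ W_μ c W_λ} w`. -/
theorem double_coset_sum_hom (R : Type) [CommRing R]
    (n r a b : ℕ) (l1 l2 m1 m2 : List ℕ)
    (hla : l1.sum = a) (hlr : l1.sum + l2.sum = r) (hln : l1.length + l2.length = n)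
    (hmb : m1.sum = b) (hmr : m1.sum + m2.sum = r) (hmn : m1.length + m2.length = n)
    (d v u : G) (hadm : Admissible r a b l1 l2 m1 m2 d v u) (c : G)
    (hc : c = u * d * v⁻¹) :
    (∃ h ∈ Hspan R r,
      sumOver R (doubleCoset r m1 m2 l1 l2 c) = sumOver R (WlamSet r m1 m2) * h) ∧
    (∃ φ : ↥(rightIdealOf R r l1 l2) →ₗ[R] MonoidAlgebra R G,
      (∀ m : rightIdealOf R r l1 l2,
        ∃ h ∈ Hspan R r, φ m = sumOver R (WlamSet r m1 m2) * h) ∧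
      (∀ (m m' : rightIdealOf R r l1 l2) (w : G), inW r w →
        (m' : MonoidAlgebra R G) = (m : MonoidAlgebra R G) * MonoidAlgebra.of R G w →
        φ m' = φ m * MonoidAlgebra.of R G w) ∧
      (∀ m : rightIdealOf R r l1 l2,
        (m : MonoidAlgebra R G) = sumOver R (WlamSet r l1 l2) →
        φ m = sumOver R (doubleCoset r m1 m2 l1 l2 c))) := by
  have hcW : inW r c := by
    rw [hc]
    exact (Wgrp r).mul_mem ((Wgrp r).mul_mem hadm.2.2.1.1.1 hadm.1.1.1)
      ((Wgrp r).inv_mem hadm.2.1.1.1.1)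
  have hDW : doubleCoset r m1 m2 l1 l2 c ⊆ {w | inW r w} := by
    rintro _ ⟨w1, h1, w2, h2, rfl⟩
    exact (Wgrp r).mul_mem ((Wgrp r).mul_mem h1.1 hcW) h2.1
  obtain ⟨h0, hh0, hD⟩ := exists_right_factor (R := R) r (Wlam r m1 m2 hmr) _ hDW (by
    rintro _ ⟨w1, h1, w2, h2, rfl⟩ y hy
    exact ⟨y * w1, (Wlam r m1 m2 hmr).mul_mem hy h1, w2, h2, by simp only [mul_assoc]⟩)
  obtain ⟨Y, hY⟩ := exists_left_factor (R := R) (Wlam r l1 l2 hlr) _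
    ((finite_inW r).subset hDW) (by
    rintro _ ⟨w1, h1, w2, h2, rfl⟩ y hy
    exact ⟨w1, h1, w2 * y, (Wlam r l1 l2 hlr).mul_mem h2 hy, by simp only [mul_assoc]⟩)
  change _ = sumOver R (WlamSet r m1 m2) * h0 at hD
  change _ = Y * sumOver R (WlamSet r l1 l2) at hY
  refine ⟨⟨h0, hh0, hD⟩, (LinearMap.mulLeft R Y).comp (rightIdealOf R r l1 l2).subtype,
    ?_, ?_, ?_⟩
  · rintro ⟨m, h, hh, rfl⟩
    refine ⟨h0 * h, Hspan_mul hh0 hh, ?_⟩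
    simp only [LinearMap.comp_apply, Submodule.subtype_apply, LinearMap.mulLeft_apply]
    rw [← mul_assoc, ← hY, hD, mul_assoc]
  · intro m m' w _ hm
    simp only [LinearMap.comp_apply, Submodule.subtype_apply, LinearMap.mulLeft_apply]
    rw [hm, mul_assoc]
  · intro m hm
    simp only [LinearMap.comp_apply, Submodule.subtype_apply, LinearMap.mulLeft_apply]
    rw [hm, hY]

end QQS
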